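/- Let Y* ∈ ℝ^{p×r}_*, X* := Y*Y*ᵀ, κ* := σ_1(Y*)/σ_r(Y*), and let μ, α ≥ 0. Let Y ∈ ℝ^{p×r}_* satisfy d(Y,Y*) > μσ_r(Y*)/κ* and ‖2(YYᵀ − X*)Y‖_F ≤ α·μ·σ_r(Y*)³/(4κ*). Let Q ∈ O(r) be a minimizer of O ↦ ‖Y − Y*O‖_F over O(r) and set θ := Y − Y*Q. Then ‖Yθᵀ + θYᵀ‖²_F + 2⟨YYᵀ − X*, θθᵀ⟩ ≤ (α − 2(√2 − 1))·σ_r(Y*)²·‖θ‖²_F. In particular, if α < 2(√2 − 1), the lifted Riemannian Hessian of H at Y has at least one negative eigenvalue and θ is an escaping direction. -/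

import Mathlib

open Matrix

/-- Trace inner product `⟨A,B⟩ = tr(AᵀB)`. -/
noncomputable def trInner {m n : ℕ} (A B : Matrix (Fin m) (Fin n) ℝ) : ℝ :=
  ∑ i, ∑ j, A i j * B i j

/-- Frobenius norm. -/
noncomputable def frob {m n : ℕ} (A : Matrix (Fin m) (Fin n) ℝ) : ℝ :=
  Real.sqrt (∑ i, ∑ j, (A i j) ^ 2)

open scoped Classical in
/-- The `i`-th largest eigenvalue (1-indexed, `1 ≤ i ≤ n`) of a Hermitian matrix; junk value 0
otherwise. -/
noncomputable def eigVal {n : ℕ} (A : Matrix (Fin n) (Fin n) ℝ) (i : ℕ) : ℝ :=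
  if hA : A.IsHermitian then
    if h : n - i < n then hA.eigenvalues (Tuple.sort hA.eigenvalues ⟨n - i, h⟩) else 0
  else 0

/-- The `i`-th largest singular value (1-indexed) of `Y`, so `sval Y 1 = ‖Y‖` (spectral norm)
and `sval Y r` is the least singular value. -/
noncomputable def sval {p r : ℕ} (Y : Matrix (Fin p) (Fin r) ℝ) (i : ℕ) : ℝ :=
  Real.sqrt (eigVal (Yᵀ * Y) i)

/-- `Q` is an orthogonal matrix. -/
def IsOrtho {r : ℕ} (Q : Matrix (Fin r) (Fin r) ℝ) : Prop := Qᵀ * Q = 1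

/-- The quotient distance `d(Y₁,Y₂) = min_{Q ∈ O(r)} ‖Y₂Q − Y₁‖_F`. -/
noncomputable def dOrth {p r : ℕ} (Y₁ Y₂ : Matrix (Fin p) (Fin r) ℝ) : ℝ :=
  sInf {c | ∃ Q : Matrix (Fin r) (Fin r) ℝ, IsOrtho Q ∧ c = frob (Y₂ * Q - Y₁)}

/-!
Replace `Ystar` by the closest point `Z = Ystar Q` of its orbit and put `M = YYᵀ - ZZᵀ`,
`θ = Y - Z`. Optimality of `Q` in `O(r)` makes `Zᵀ Y` positive semidefinite: varying `Q` along
`exp (tK)` with `K` skew gives symmetry, and comparing with Householder reflections gives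
positivity. Since `Yθᵀ + θYᵀ = M + θθᵀ`, the Hessian along `θ` equals
`4⟨grad, θ⟩ - 3‖M‖² + ‖θθᵀ‖²`. Expanding `‖M‖²` by means of the symmetry of `Zᵀ Y` and completing
squares, `⟨Zᵀ Y, θᵀ θ⟩ ≥ 0` yields both `‖θθᵀ‖² ≤ 2‖M‖²` and `2(√2 - 1)‖Zθᵀ‖² ≤ ‖M‖²`, where
`‖Zθᵀ‖ ≥ σ_r(Ystar)‖θ‖`. The gradient term is absorbed by Cauchy–Schwarz and the bound
`d(Y, Ystar) ≤ ‖θ‖`.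
-/

section FrobeniusInner

variable {m n k l : ℕ}

lemma trInner_eq_trace (A B : Matrix (Fin m) (Fin n) ℝ) : trInner A B = (Aᵀ * B).trace := by
  simp only [trInner, trace, diag, mul_apply, transpose_apply]
  exact Finset.sum_comm

lemma trInner_comm (A B : Matrix (Fin m) (Fin n) ℝ) : trInner A B = trInner B A := by
  simp only [trInner, mul_comm]

lemma trInner_add_left (A B C : Matrix (Fin m) (Fin n) ℝ) :
    trInner (A + B) C = trInner A C + trInner B C := by
  simp only [trInner_eq_trace, transpose_add, Matrix.add_mul, trace_add]

lemma trInner_add_right (A B C : Matrix (Fin m) (Fin n) ℝ) :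
    trInner A (B + C) = trInner A B + trInner A C := by
  simp only [trInner_eq_trace, Matrix.mul_add, trace_add]

lemma trInner_smul_left (c : ℝ) (A B : Matrix (Fin m) (Fin n) ℝ) :
    trInner (c • A) B = c * trInner A B := by
  simp only [trInner_eq_trace, transpose_smul, smul_mul, trace_smul, smul_eq_mul]

lemma trInner_transpose_transpose (A B : Matrix (Fin m) (Fin n) ℝ) :
    trInner Aᵀ Bᵀ = trInner A B := by
  rw [trInner_comm, trInner_eq_trace, trInner_eq_trace, transpose_transpose, trace_mul_comm]

lemma trInner_mul_eq_trInner_transpose_mul (A : Matrix (Fin m) (Fin n) ℝ)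
    (B : Matrix (Fin n) (Fin k) ℝ) (C : Matrix (Fin m) (Fin k) ℝ) :
    trInner (A * B) C = trInner B (Aᵀ * C) := by
  rw [trInner_eq_trace, trInner_eq_trace, transpose_mul, Matrix.mul_assoc]

lemma trInner_mul_eq_trInner_mul_transpose (A : Matrix (Fin m) (Fin n) ℝ)
    (B : Matrix (Fin n) (Fin k) ℝ) (C : Matrix (Fin m) (Fin k) ℝ) :
    trInner (A * B) C = trInner A (C * Bᵀ) := by
  rw [← trInner_transpose_transpose, transpose_mul, trInner_mul_eq_trInner_transpose_mul,
    ← trInner_transpose_transpose A, transpose_mul]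

lemma trInner_mul_transpose_mul_transpose (A : Matrix (Fin m) (Fin n) ℝ)
    (B : Matrix (Fin k) (Fin n) ℝ) (C : Matrix (Fin m) (Fin l) ℝ) (D : Matrix (Fin k) (Fin l) ℝ) :
    trInner (A * Bᵀ) (C * Dᵀ) = trInner (Cᵀ * A) (Dᵀ * B) := by
  rw [trInner_mul_eq_trInner_mul_transpose, transpose_transpose, Matrix.mul_assoc, trInner_comm,
    trInner_mul_eq_trInner_transpose_mul, trInner_comm]

lemma trInner_transpose_mul_self_nonneg {A : Matrix (Fin n) (Fin n) ℝ} (hA : A.PosSemidef)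
    (B : Matrix (Fin m) (Fin n) ℝ) : 0 ≤ trInner A (Bᵀ * B) := by
  have hconj : 0 ≤ (B * A * Bᴴ).trace := (hA.mul_mul_conjTranspose_same B).trace_nonneg
  rwa [conjTranspose_eq_transpose_of_trivial, trace_mul_comm, ← Matrix.mul_assoc, trace_mul_comm,
    ← hA.isHermitian.eq, conjTranspose_eq_transpose_of_trivial, ← trInner_eq_trace] at hconj

lemma frob_nonneg (A : Matrix (Fin m) (Fin n) ℝ) : 0 ≤ frob A :=
  Real.sqrt_nonneg _

lemma frob_sq (A : Matrix (Fin m) (Fin n) ℝ) : frob A ^ 2 = trInner A A := by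
  rw [frob, Real.sq_sqrt (by positivity)]
  simp only [trInner, sq]

lemma frob_add_sq (A B : Matrix (Fin m) (Fin n) ℝ) :
    frob (A + B) ^ 2 = frob A ^ 2 + 2 * trInner A B + frob B ^ 2 := by
  simp only [frob_sq, trInner_add_left, trInner_add_right, trInner_comm B A]
  ring

lemma frob_smul_sq (c : ℝ) (A : Matrix (Fin m) (Fin n) ℝ) :
    frob (c • A) ^ 2 = c ^ 2 * frob A ^ 2 := by
  rw [frob_sq, frob_sq, trInner_smul_left, trInner_comm, trInner_smul_left]
  ring

lemma frob_sub_comm (A B : Matrix (Fin m) (Fin n) ℝ) : frob (A - B) = frob (B - A) := by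
  simp only [frob, Matrix.sub_apply, sub_sq_comm]

lemma frob_sub_sq (A B : Matrix (Fin m) (Fin n) ℝ) :
    frob (A - B) ^ 2 = frob A ^ 2 - 2 * trInner A B + frob B ^ 2 := by
  rw [sub_eq_add_neg, ← neg_one_smul ℝ B, frob_add_sq, frob_smul_sq, trInner_comm,
    trInner_smul_left, trInner_comm]
  ring

lemma trInner_le_frob_mul_frob (A B : Matrix (Fin m) (Fin n) ℝ) :
    trInner A B ≤ frob A * frob B := by
  simp only [trInner, frob, ← Fintype.sum_prod_type']
  exact Real.sum_mul_le_sqrt_mul_sqrt _ _ _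

lemma IsOrtho.mul_transpose_self {Q : Matrix (Fin n) (Fin n) ℝ} (hQ : IsOrtho Q) : Q * Qᵀ = 1 :=
  mul_eq_one_comm.mp hQ

lemma isOrtho_iff_mem_orthogonalGroup {Q : Matrix (Fin n) (Fin n) ℝ} :
    IsOrtho Q ↔ Q ∈ orthogonalGroup (Fin n) ℝ :=
  (mem_orthogonalGroup_iff' (Fin n) ℝ).symm

lemma IsOrtho.mul {P Q : Matrix (Fin n) (Fin n) ℝ} (hP : IsOrtho P) (hQ : IsOrtho Q) :
    IsOrtho (P * Q) := by
  rw [isOrtho_iff_mem_orthogonalGroup] at *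
  exact mul_mem hP hQ

lemma IsOrtho.frob_mul_sq {Q : Matrix (Fin m) (Fin m) ℝ} (hQ : IsOrtho Q)
    (A : Matrix (Fin m) (Fin n) ℝ) : frob (Q * A) ^ 2 = frob A ^ 2 := by
  rw [frob_sq, frob_sq, trInner_mul_eq_trInner_transpose_mul, ← Matrix.mul_assoc, hQ,
    Matrix.one_mul]

end FrobeniusInner

section Procrustes

variable {n : Type*} [Fintype n] [DecidableEq n] {N : Matrix n n ℝ}

lemma exp_mem_orthogonalGroup_of_transpose_eq_neg {K : Matrix n n ℝ} (hK : Kᵀ = -K) :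
    NormedSpace.exp K ∈ orthogonalGroup n ℝ := by
  rw [mem_orthogonalGroup_iff', ← exp_transpose, hK, exp_neg]
  exact nonsing_inv_mul _ ((isUnit_iff_isUnit_det _).mp (isUnit_exp K))

lemma trace_mul_eq_zero_of_transpose_eq_neg {K : Matrix n n ℝ}
    (hN : ∀ O ∈ orthogonalGroup n ℝ, (O * N).trace ≤ N.trace) (hK : Kᵀ = -K) :
    (K * N).trace = 0 := by
  have hderiv : HasDerivAt (fun t : ℝ ↦ (NormedSpace.exp (t • K) * N).trace) (K * N).trace 0 := by
    open scoped Matrix.Norms.Operator in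
    have hexp : HasDerivAt (fun t : ℝ ↦ NormedSpace.exp (t • K) * N) (K * N) 0 := by
      have hmul := (hasDerivAt_exp_smul_const K (0 : ℝ)).mul_const N
      rwa [zero_smul, NormedSpace.exp_zero, Matrix.one_mul] at hmul
    exact (traceLinearMap n ℝ ℝ).toContinuousLinearMap.hasFDerivAt.comp_hasDerivAt 0 hexp
  have hmax : IsLocalMax (fun t : ℝ ↦ (NormedSpace.exp (t • K) * N).trace) 0 := by
    refine Filter.Eventually.of_forall fun t ↦ ?_
    have hskew : (t • K)ᵀ = -(t • K) := by rw [transpose_smul, hK, smul_neg]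
    simpa using hN _ (exp_mem_orthogonalGroup_of_transpose_eq_neg hskew)
  exact hmax.hasDerivAt_eq_zero hderiv

lemma isSymm_of_forall_trace_mul_le
    (hN : ∀ O ∈ orthogonalGroup n ℝ, (O * N).trace ≤ N.trace) : N.IsSymm := by
  have hskew : (N - Nᵀ)ᵀ = -(N - Nᵀ) := by
    rw [transpose_sub, transpose_transpose, neg_sub]
  have hleft : ((N - Nᵀ) * N).trace = 0 := trace_mul_eq_zero_of_transpose_eq_neg hN hskew
  have hright : ((N - Nᵀ) * Nᵀ).trace = 0 := by
    rw [← trace_transpose, transpose_mul, transpose_transpose, hskew, trace_mul_comm,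
      Matrix.neg_mul, trace_neg, hleft, neg_zero]
  have hsq : ((N - Nᵀ)ᴴ * (N - Nᵀ)).trace = 0 := by
    rw [conjTranspose_eq_transpose_of_trivial, hskew, Matrix.neg_mul, Matrix.mul_sub, trace_neg,
      trace_sub, hleft, hright, sub_zero, neg_zero]
  exact (sub_eq_zero.mp (trace_conjTranspose_mul_self_eq_zero_iff.mp hsq)).symm

lemma one_sub_smul_vecMulVec_mem_orthogonalGroup (v : n → ℝ) :
    1 - (2 / (v ⬝ᵥ v)) • vecMulVec v v ∈ orthogonalGroup n ℝ := by
  have hsq : vecMulVec v v * vecMulVec v v = (v ⬝ᵥ v) • vecMulVec v v := by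
    rw [vecMulVec_mul_vecMulVec, vecMulVec_smul]
  rw [mem_orthogonalGroup_iff', transpose_sub, transpose_smul, transpose_one, transpose_vecMulVec]
  rcases eq_or_ne (v ⬝ᵥ v) 0 with hv | hv
  · simp [hv]
  simp only [Matrix.sub_mul, Matrix.mul_sub, smul_mul, Matrix.mul_smul, Matrix.one_mul,
    Matrix.mul_one, hsq]
  match_scalars <;> field_simp
  ring

lemma posSemidef_of_forall_trace_mul_le
    (hN : ∀ O ∈ orthogonalGroup n ℝ, (O * N).trace ≤ N.trace) : N.PosSemidef := by
  refine .of_dotProduct_mulVec_nonneg (isSymm_of_forall_trace_mul_le hN) fun v ↦ ?_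
  rw [star_trivial]
  rcases eq_or_ne v 0 with rfl | hv
  · simp
  have htrace : (vecMulVec v v * N).trace = v ⬝ᵥ N *ᵥ v := by
    rw [trace_mul_comm, mul_vecMulVec, trace_vecMulVec, dotProduct_comm]
  have hreflect := hN _ (one_sub_smul_vecMulVec_mem_orthogonalGroup v)
  rw [Matrix.sub_mul, Matrix.one_mul, smul_mul, trace_sub, trace_smul, htrace, smul_eq_mul,
    sub_le_self_iff] at hreflect
  have hvv : 0 < v ⬝ᵥ v := by simpa using dotProduct_star_self_pos_iff.mpr hv
  exact nonneg_of_mul_nonneg_right hreflect (by positivity)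

lemma posSemidef_transpose_mul_of_forall_frob_sub_le {p r : ℕ} {Y Z : Matrix (Fin p) (Fin r) ℝ}
    (hmin : ∀ O : Matrix (Fin r) (Fin r) ℝ, IsOrtho O → frob (Y - Z) ≤ frob (Y - Z * O)) :
    (Zᵀ * Y).PosSemidef := by
  refine posSemidef_of_forall_trace_mul_le fun O hO ↦ ?_
  have hOt : IsOrtho Oᵀ := isOrtho_iff_mem_orthogonalGroup.mpr (Unitary.star_mem hO)
  have hnorm : frob (Z * Oᵀ) ^ 2 = frob Z ^ 2 := by
    rw [frob_sq, frob_sq, trInner_mul_eq_trInner_mul_transpose, Matrix.mul_assoc,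
      hOt.mul_transpose_self, Matrix.mul_one]
  have hle : frob (Y - Z) ^ 2 ≤ frob (Y - Z * Oᵀ) ^ 2 :=
    pow_le_pow_left₀ (frob_nonneg _) (hmin _ hOt) 2
  rw [frob_sub_sq, frob_sub_sq, hnorm, trInner_comm Y, trInner_comm Y, trInner_eq_trace,
    trInner_eq_trace, transpose_mul, transpose_transpose, Matrix.mul_assoc] at hle
  linarith

end Procrustes

section SingularValues

variable {n p r k : ℕ}

lemma exists_eigVal_self_eq_eigenvalues {A : Matrix (Fin n) (Fin n) ℝ} (hA : A.IsHermitian)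
    (hn : 0 < n) : ∃ i, eigVal A n = hA.eigenvalues i := by
  have hlt : n - n < n := by omega
  exact ⟨_, by rw [eigVal, dif_pos hA, dif_pos hlt]⟩

lemma eigVal_self_le_eigenvalues {A : Matrix (Fin n) (Fin n) ℝ} (hA : A.IsHermitian) (i : Fin n) :
    eigVal A n ≤ hA.eigenvalues i := by
  have hlt : n - n < n := by rw [Nat.sub_self]; exact i.pos
  obtain ⟨j, rfl⟩ := (Tuple.sort hA.eigenvalues).surjective i
  rw [eigVal, dif_pos hA, dif_pos hlt]
  exact Tuple.monotone_sort hA.eigenvalues (Fin.mk_le_of_le_val (by simp))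

lemma posSemidef_sub_eigVal_smul_one {A : Matrix (Fin n) (Fin n) ℝ} (hA : A.IsHermitian) :
    (A - eigVal A n • 1).PosSemidef := by
  open scoped MatrixOrder in
  rw [← Algebra.algebraMap_eq_smul_one]
  refine algebraMap_le_of_le_spectrum ?_ hA
  rw [hA.spectrum_real_eq_range_eigenvalues]
  exact Set.forall_mem_range.mpr (eigVal_self_le_eigenvalues hA)

lemma eigVal_nonneg {A : Matrix (Fin n) (Fin n) ℝ} (hA : A.PosSemidef) (i : ℕ) :
    0 ≤ eigVal A i := by
  rw [eigVal, dif_pos hA.isHermitian]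
  split_ifs
  · exact hA.eigenvalues_nonneg _
  · exact le_rfl

lemma sval_nonneg (Y : Matrix (Fin p) (Fin r) ℝ) (i : ℕ) : 0 ≤ sval Y i :=
  Real.sqrt_nonneg _

lemma sval_pos_of_rank_eq {Y : Matrix (Fin p) (Fin r) ℝ} (hY : Y.rank = r) (hr : 0 < r) :
    0 < sval Y r := by
  have hinj : Function.Injective Y.mulVec := by
    rw [mulVec_injective_iff, linearIndependent_iff_card_eq_finrank_span, Fintype.card_fin,
      Set.finrank, ← rank_eq_finrank_span_cols, hY]
  have hpos : (Yᵀ * Y).PosDef := PosDef.conjTranspose_mul_self Y hinj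
  obtain ⟨i, hi⟩ := exists_eigVal_self_eq_eigenvalues hpos.isHermitian hr
  rw [sval, hi]
  exact Real.sqrt_pos.mpr (hpos.eigenvalues_pos i)

lemma sval_sq_mul_frob_sq_le (Y : Matrix (Fin p) (Fin r) ℝ) (B : Matrix (Fin r) (Fin k) ℝ) :
    sval Y r ^ 2 * frob B ^ 2 ≤ frob (Y * B) ^ 2 := by
  have hgram : (Yᵀ * Y).PosSemidef := posSemidef_conjTranspose_mul_self Y
  have hgap :=
    trInner_transpose_mul_self_nonneg (posSemidef_sub_eigVal_smul_one hgram.isHermitian) Bᵀ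
  rw [sval, Real.sq_sqrt (eigVal_nonneg hgram r)]
  rw [transpose_transpose, sub_eq_add_neg, ← neg_smul, trInner_add_left, trInner_smul_left] at hgap
  have hone : trInner 1 (B * Bᵀ) = frob B ^ 2 := by
    rw [← trInner_mul_eq_trInner_mul_transpose, Matrix.one_mul, frob_sq]
  have hmul : trInner (Yᵀ * Y) (B * Bᵀ) = frob (Y * B) ^ 2 := by
    rw [← trInner_mul_eq_trInner_mul_transpose, Matrix.mul_assoc, frob_sq,
      trInner_mul_eq_trInner_transpose_mul, transpose_transpose]
  rw [hone, hmul] at hgap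
  linarith

end SingularValues

section GramDifference

variable {p r : ℕ} {Y Z : Matrix (Fin p) (Fin r) ℝ}

lemma gram_sub_gram (Y Z : Matrix (Fin p) (Fin r) ℝ) :
    Y * Yᵀ - Z * Zᵀ = Z * (Y - Z)ᵀ + (Y - Z) * Zᵀ + (Y - Z) * (Y - Z)ᵀ := by
  simp only [transpose_sub, Matrix.mul_sub, Matrix.sub_mul]
  abel

lemma frob_gram_sub_gram_sq (hsymm : (Zᵀ * Y).IsSymm) :
    frob (Y * Yᵀ - Z * Zᵀ) ^ 2 =
      2 * frob (Z * (Y - Z)ᵀ) ^ 2 + 2 * frob (Zᵀ * (Y - Z)) ^ 2 +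
        4 * trInner (Zᵀ * (Y - Z)) ((Y - Z)ᵀ * (Y - Z)) + frob ((Y - Z)ᵀ * (Y - Z)) ^ 2 := by
  have hcross : (Y - Z)ᵀ * Z = Zᵀ * (Y - Z) := by
    have h : Yᵀ * Z = Zᵀ * Y := by simpa [IsSymm, transpose_mul] using hsymm
    rw [transpose_sub, Matrix.sub_mul, Matrix.mul_sub, h]
  rw [gram_sub_gram]
  simp only [frob_sq, trInner_add_left, trInner_add_right, trInner_mul_transpose_mul_transpose,
    hcross, trInner_comm ((Y - Z)ᵀ * (Y - Z))]
  ring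

lemma frob_sq_add_trInner_nonneg (hpos : (Zᵀ * Y).PosSemidef) :
    0 ≤ frob (Z * (Y - Z)ᵀ) ^ 2 + trInner (Zᵀ * (Y - Z)) ((Y - Z)ᵀ * (Y - Z)) := by
  rw [frob_sq, trInner_mul_transpose_mul_transpose, ← trInner_add_left, ← Matrix.mul_add,
    add_sub_cancel]
  exact trInner_transpose_mul_self_nonneg hpos _

lemma frob_sub_mul_transpose_sq_le (hpos : (Zᵀ * Y).PosSemidef) :
    frob ((Y - Z) * (Y - Z)ᵀ) ^ 2 ≤ 2 * frob (Y * Yᵀ - Z * Zᵀ) ^ 2 := by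
  have hsquare : 0 ≤ frob ((Y - Z)ᵀ * (Y - Z) + (2 : ℝ) • (Zᵀ * (Y - Z))) ^ 2 := sq_nonneg _
  rw [frob_add_sq, frob_smul_sq, trInner_comm, trInner_smul_left] at hsquare
  rw [frob_sq, trInner_mul_transpose_mul_transpose, ← frob_sq,
    frob_gram_sub_gram_sq hpos.isHermitian]
  linarith [frob_sq_add_trInner_nonneg hpos]

lemma frob_mul_sub_transpose_sq_le (hpos : (Zᵀ * Y).PosSemidef) :
    2 * (√2 - 1) * frob (Z * (Y - Z)ᵀ) ^ 2 ≤ frob (Y * Yᵀ - Z * Zᵀ) ^ 2 := by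
  -- With `θ = Y - Z`, this square absorbs all of `2‖Zᵀθ‖²` and leaves `(4 - 2√2)⟨Zᵀθ, θᵀθ⟩`, which
  -- costs at most `(4 - 2√2)‖Zθᵀ‖²` out of the available `2‖Zθᵀ‖²`.
  have hsquare : 0 ≤ frob ((Y - Z)ᵀ * (Y - Z) + √2 • (Zᵀ * (Y - Z))) ^ 2 := sq_nonneg _
  rw [frob_add_sq, frob_smul_sq, trInner_comm, trInner_smul_left, Real.sq_sqrt zero_le_two]
    at hsquare
  have hsqrt : 0 ≤ 4 - 2 * √2 := by
    have : √2 ≤ 2 := Real.sqrt_le_iff.mpr (by norm_num)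
    linarith
  have hcross := mul_nonneg hsqrt (frob_sq_add_trInner_nonneg hpos)
  rw [frob_gram_sub_gram_sq hpos.isHermitian]
  linarith

end GramDifference

section Hessian

variable {p r : ℕ}

/-- The horizontal lift at `Y` of the Riemannian gradient of `H([Y]) = ½‖YYᵀ − X‖²_F`. -/
def liftedGrad (X : Matrix (Fin p) (Fin p) ℝ) (Y : Matrix (Fin p) (Fin r) ℝ) :
    Matrix (Fin p) (Fin r) ℝ :=
  (2 : ℝ) • ((Y * Yᵀ - X) * Y)

/-- The quadratic form at `Y`, in direction `θ`, of the horizontal lift of the Riemannian Hessian of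
`H([Y]) = ½‖YYᵀ − X‖²_F`. -/
noncomputable def liftedHessian (X : Matrix (Fin p) (Fin p) ℝ) (Y θ : Matrix (Fin p) (Fin r) ℝ) :
    ℝ :=
  frob (Y * θᵀ + θ * Yᵀ) ^ 2 + 2 * trInner (Y * Yᵀ - X) (θ * θᵀ)

lemma trInner_liftedGrad {X : Matrix (Fin p) (Fin p) ℝ} (hX : X.IsSymm)
    (Y θ : Matrix (Fin p) (Fin r) ℝ) :
    trInner (liftedGrad X Y) θ = trInner (Y * Yᵀ - X) (Y * θᵀ + θ * Yᵀ) := by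
  have hsymm : (Y * Yᵀ - X)ᵀ = Y * Yᵀ - X := by
    rw [transpose_sub, transpose_mul, transpose_transpose, hX]
  have htranspose : trInner (Y * Yᵀ - X) (Y * θᵀ) = trInner (Y * Yᵀ - X) (θ * Yᵀ) := by
    rw [← trInner_transpose_transpose, hsymm, transpose_mul, transpose_transpose]
  rw [liftedGrad, trInner_smul_left, trInner_mul_eq_trInner_mul_transpose, trInner_add_right,
    htranspose, two_mul]

lemma liftedHessian_sub_eq (Y Z : Matrix (Fin p) (Fin r) ℝ) :
    liftedHessian (Z * Zᵀ) Y (Y - Z) =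
      4 * trInner (liftedGrad (Z * Zᵀ) Y) (Y - Z) - 3 * frob (Y * Yᵀ - Z * Zᵀ) ^ 2 +
        frob ((Y - Z) * (Y - Z)ᵀ) ^ 2 := by
  have hdir : Y * (Y - Z)ᵀ + (Y - Z) * Yᵀ = Y * Yᵀ - Z * Zᵀ + (Y - Z) * (Y - Z)ᵀ := by
    simp only [transpose_sub, Matrix.mul_sub, Matrix.sub_mul]
    abel
  have hsymm : (Z * Zᵀ).IsSymm := by rw [IsSymm, transpose_mul, transpose_transpose]
  rw [trInner_liftedGrad hsymm, liftedHessian, hdir, frob_add_sq,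
    trInner_add_right, ← frob_sq]
  ring

theorem liftedHessian_sub_le {Y Z : Matrix (Fin p) (Fin r) ℝ} (hpos : (Zᵀ * Y).PosSemidef) :
    liftedHessian (Z * Zᵀ) Y (Y - Z) ≤
      4 * frob (liftedGrad (Z * Zᵀ) Y) * frob (Y - Z) -
        2 * (√2 - 1) * frob (Z * (Y - Z)ᵀ) ^ 2 := by
  rw [liftedHessian_sub_eq]
  linarith [trInner_le_frob_mul_frob (liftedGrad (Z * Zᵀ) Y) (Y - Z),
    frob_sub_mul_transpose_sq_le hpos, frob_mul_sub_transpose_sq_le hpos]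

lemma dOrth_le_frob_sub (Y Ystar : Matrix (Fin p) (Fin r) ℝ) {Q : Matrix (Fin r) (Fin r) ℝ}
    (hQ : IsOrtho Q) : dOrth Y Ystar ≤ frob (Y - Ystar * Q) := by
  refine csInf_le ⟨0, ?_⟩ ⟨Q, hQ, frob_sub_comm _ _⟩
  rintro c ⟨O, -, rfl⟩
  exact frob_nonneg _

theorem liftedHessian_sub_mul_le {Y Ystar : Matrix (Fin p) (Fin r) ℝ}
    {Q : Matrix (Fin r) (Fin r) ℝ} (hQ : IsOrtho Q)
    (hQmin : ∀ O : Matrix (Fin r) (Fin r) ℝ, IsOrtho O →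
      frob (Y - Ystar * Q) ≤ frob (Y - Ystar * O)) :
    liftedHessian (Ystar * Ystarᵀ) Y (Y - Ystar * Q) ≤
      4 * frob (liftedGrad (Ystar * Ystarᵀ) Y) * frob (Y - Ystar * Q) -
        2 * (√2 - 1) * sval Ystar r ^ 2 * frob (Y - Ystar * Q) ^ 2 := by
  set Z := Ystar * Q with hZ
  have hgram : Ystar * Ystarᵀ = Z * Zᵀ := by
    rw [hZ, transpose_mul, Matrix.mul_assoc, ← Matrix.mul_assoc Q, hQ.mul_transpose_self,
      Matrix.one_mul]
  have hpos : (Zᵀ * Y).PosSemidef :=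
    posSemidef_transpose_mul_of_forall_frob_sub_le fun O hO ↦ by
      rw [hZ, Matrix.mul_assoc]
      exact hQmin (Q * O) (hQ.mul hO)
  have hsval : sval Ystar r ^ 2 * frob (Y - Z) ^ 2 ≤ frob (Z * (Y - Z)ᵀ) ^ 2 := by
    have h := sval_sq_mul_frob_sq_le Ystar (Q * (Y - Z)ᵀ)
    rwa [hQ.frob_mul_sq, ← Matrix.mul_assoc, ← hZ, frob_sq (Y - Z)ᵀ, trInner_transpose_transpose,
      ← frob_sq] at h
  have hsqrt : 0 ≤ 2 * (√2 - 1) := by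
    have : 1 ≤ √2 := Real.one_le_sqrt.mpr one_le_two
    linarith
  rw [hgram]
  linarith [liftedHessian_sub_le hpos, mul_le_mul_of_nonneg_left hsval hsqrt]

end Hessian

theorem stmt9_general {p r : ℕ} (Ystar : Matrix (Fin p) (Fin r) ℝ) (hYs : Ystar.rank = r)
    (X : Matrix (Fin p) (Fin p) ℝ) (hX : X = Ystar * Ystarᵀ)
    (κ : ℝ) (hκ : κ = sval Ystar 1 / sval Ystar r)
    (μ α : ℝ) (hμ0 : 0 ≤ μ) (hα0 : 0 ≤ α)
    (Y : Matrix (Fin p) (Fin r) ℝ)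
    (hd : dOrth Y Ystar > μ * sval Ystar r / κ)
    (hgrad : frob ((2 : ℝ) • ((Y * Yᵀ - X) * Y)) ≤ α * μ * (sval Ystar r) ^ 3 / (4 * κ))
    (Q : Matrix (Fin r) (Fin r) ℝ) (hQ : IsOrtho Q)
    (hQmin : ∀ O : Matrix (Fin r) (Fin r) ℝ, IsOrtho O →
      frob (Y - Ystar * Q) ≤ frob (Y - Ystar * O))
    (θ : Matrix (Fin p) (Fin r) ℝ) (hθ : θ = Y - Ystar * Q) :
    (frob (Y * θᵀ + θ * Yᵀ)) ^ 2 + 2 * trInner (Y * Yᵀ - X) (θ * θᵀ) ≤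
      (α - 2 * (Real.sqrt 2 - 1)) * (sval Ystar r) ^ 2 * (frob θ) ^ 2 ∧
    (α < 2 * (Real.sqrt 2 - 1) →
      (frob (Y * θᵀ + θ * Yᵀ)) ^ 2 + 2 * trInner (Y * Yᵀ - X) (θ * θᵀ) < 0) := by
  subst hX hθ
  set θ := Y - Ystar * Q
  set σ := sval Ystar r
  have hdist : μ * σ / κ < frob θ := hd.trans_le (dOrth_le_frob_sub Y Ystar hQ)
  have hgradle : 4 * frob (liftedGrad (Ystar * Ystarᵀ) Y) ≤ α * σ ^ 2 * frob θ := calc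
    _ ≤ 4 * (α * μ * σ ^ 3 / (4 * κ)) := by gcongr; exact hgrad
    _ = α * σ ^ 2 * (μ * σ / κ) := by rw [mul_comm 4 κ, ← div_div]; ring
    _ ≤ α * σ ^ 2 * frob θ := by gcongr
  have hle : liftedHessian (Ystar * Ystarᵀ) Y θ ≤ (α - 2 * (√2 - 1)) * σ ^ 2 * frob θ ^ 2 := by
    linarith [liftedHessian_sub_mul_le hQ hQmin,
      mul_le_mul_of_nonneg_right hgradle (frob_nonneg θ)]
  refine ⟨hle, fun hα ↦ hle.trans_lt ?_⟩
  have hσ0 : 0 ≤ σ := sval_nonneg _ _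
  have hκ0 : 0 ≤ κ := hκ ▸ div_nonneg (sval_nonneg _ _) hσ0
  have hθ0 : 0 < frob θ := (by positivity : 0 ≤ μ * σ / κ).trans_lt hdist
  have hr : 0 < r := Nat.pos_of_ne_zero (by rintro rfl; simp [frob] at hθ0)
  have hσ : 0 < σ := sval_pos_of_rank_eq hYs hr
  rw [mul_assoc]
  exact mul_neg_of_neg_of_pos (sub_neg.mpr hα) (by positivity)

/-- region with negative curvature for `H`: at points far from `Ystar` with
small gradient of `H`, the lifted Hessian quadratic form of `H` along `θ = Y - Ystar Q` is at
most `(α - 2(√2-1)) σ_r(Ystar)² ‖θ‖²`; in particular it is negative when `α < 2(√2-1)`. -/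
theorem stmt9 {p r : ℕ} (Ystar : Matrix (Fin p) (Fin r) ℝ) (hYs : Ystar.rank = r)
    (X : Matrix (Fin p) (Fin p) ℝ) (hX : X = Ystar * Ystarᵀ)
    (κ : ℝ) (hκ : κ = sval Ystar 1 / sval Ystar r)
    (μ α : ℝ) (hμ0 : 0 ≤ μ) (hα0 : 0 ≤ α)
    (Y : Matrix (Fin p) (Fin r) ℝ) (hY : Y.rank = r)
    (hd : dOrth Y Ystar > μ * sval Ystar r / κ)
    (hgrad : frob ((2 : ℝ) • ((Y * Yᵀ - X) * Y)) ≤ α * μ * (sval Ystar r) ^ 3 / (4 * κ))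
    (Q : Matrix (Fin r) (Fin r) ℝ) (hQ : IsOrtho Q)
    (hQmin : ∀ O : Matrix (Fin r) (Fin r) ℝ, IsOrtho O →
      frob (Y - Ystar * Q) ≤ frob (Y - Ystar * O))
    (θ : Matrix (Fin p) (Fin r) ℝ) (hθ : θ = Y - Ystar * Q) :
    (frob (Y * θᵀ + θ * Yᵀ)) ^ 2 + 2 * trInner (Y * Yᵀ - X) (θ * θᵀ) ≤
      (α - 2 * (Real.sqrt 2 - 1)) * (sval Ystar r) ^ 2 * (frob θ) ^ 2 ∧
    (α < 2 * (Real.sqrt 2 - 1) →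
      (frob (Y * θᵀ + θ * Yᵀ)) ^ 2 + 2 * trInner (Y * Yᵀ - X) (θ * θᵀ) < 0) := by
  exact stmt9_general Ystar hYs X hX κ hκ μ α hμ0 hα0 Y hd hgrad Q hQ hQmin θ hθ
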